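/- Let p > 1 be a real number, set μ = min{1, p−1}, and let a > 0. Define, for s ≥ 0, T(s) = (a+s)^p s − a^p s − ((2+μ)/(p+1)) (a+s)^{p+1} + ((2+μ)/(p+1)) a^{p+1} + (2+μ) a^p s + (μ/2) p a^{p−1} s². Then T(0) = 0, T'(0) = 0, T''(0) = 0, and for every s ≥ 0 the third derivative is given by T'''(s) = p(p−1)(p−2)(a+s)^{p−3} s + p(p−1)(1−μ)(a+s)^{p−2}, which is nonnegative for all s ≥ 0. -/

import Mathlib

theorem hasDerivAt_const_add_rpow {a s : ℝ} (h : 0 < a + s) (q : ℝ) :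
    HasDerivAt (fun x : ℝ => (a + x) ^ q) (q * (a + s) ^ (q - 1)) s := by
  simpa using ((hasDerivAt_id s).const_add a).rpow_const (p := q) (Or.inl h.ne')

theorem deriv_deriv_eq_of_hasDerivAt_Ioi {b : ℝ} {f g : ℝ → ℝ} {g' s : ℝ}
    (hf : ∀ x, b < x → deriv f x = g x) (hs : b < s) (hg : HasDerivAt g g' s) :
    deriv (deriv f) s = g' := by
  have h : deriv f =ᶠ[nhds s] g := by
    filter_upwards [Ioi_mem_nhds hs] with x hx using hf x hx
  rw [h.deriv_eq, hg.deriv]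

theorem third_deriv_nonneg {p a s : ℝ} (hp : 1 < p) (ha : 0 < a) (hs : 0 ≤ s) :
    0 ≤ p * (p - 1) * (p - 2) * (a + s) ^ (p - 3) * s
      + p * (p - 1) * (1 - min 1 (p - 1)) * (a + s) ^ (p - 2) := by
  have hpos : 0 < a + s := by positivity
  have hpp : 0 ≤ p * (p - 1) := mul_nonneg (by linarith) (by linarith)
  have hrpow : 0 ≤ (a + s) ^ (p - 3) := Real.rpow_nonneg hpos.le _
  rcases le_total 2 p with h | h
  · rw [min_eq_left (by linarith)]
    have := mul_nonneg (mul_nonneg (mul_nonneg hpp (sub_nonneg.2 h)) hrpow) hs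
    linarith
  · rw [min_eq_right (by linarith), show p - 2 = p - 3 + 1 by ring,
      Real.rpow_add_one hpos.ne']
    have := mul_nonneg (mul_nonneg (mul_nonneg hpp (sub_nonneg.2 h)) hrpow) ha.le
    linarith

/-- computations in the proof of Lemma 3.5(i): with `p > 1`,
`μ = min {1, p-1}`, `a > 0` and
`T(s) = (a+s)^p s − a^p s − ((2+μ)/(p+1))(a+s)^{p+1} + ((2+μ)/(p+1)) a^{p+1}
+ (2+μ) a^p s + (μ/2) p a^{p−1} s²`, one has `T(0) = T'(0) = T''(0) = 0` and, for
every `s ≥ 0`, `T'''(s) = p(p−1)(p−2)(a+s)^{p−3} s + p(p−1)(1−μ)(a+s)^{p−2} ≥ 0`. -/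
theorem T_derivatives (p : ℝ) (hp : 1 < p) (a : ℝ) (ha : 0 < a)
    (μ : ℝ) (hμ : μ = min 1 (p - 1)) (T : ℝ → ℝ)
    (hT : T = fun s : ℝ =>
      (a + s) ^ p * s - a ^ p * s
        - ((2 + μ) / (p + 1)) * (a + s) ^ (p + 1)
        + ((2 + μ) / (p + 1)) * a ^ (p + 1)
        + (2 + μ) * a ^ p * s
        + (μ / 2) * p * a ^ (p - 1) * s ^ 2) :
    T 0 = 0 ∧ deriv T 0 = 0 ∧ deriv (deriv T) 0 = 0 ∧
      ∀ s : ℝ, 0 ≤ s →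
        deriv (deriv (deriv T)) s
            = p * (p - 1) * (p - 2) * (a + s) ^ (p - 3) * s
              + p * (p - 1) * (1 - μ) * (a + s) ^ (p - 2) ∧
          0 ≤ p * (p - 1) * (p - 2) * (a + s) ^ (p - 3) * s
              + p * (p - 1) * (1 - μ) * (a + s) ^ (p - 2) := by
  have hpos : ∀ {s : ℝ}, -a < s → 0 < a + s := fun h => by linarith
  have h1 : ∀ s, -a < s → deriv T s = p * (a + s) ^ (p - 1) * s - (1 + μ) * (a + s) ^ p
      + (1 + μ) * a ^ p + μ * p * a ^ (p - 1) * s := by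
    intro s hs
    have hd := ((((((hasDerivAt_const_add_rpow (hpos hs) p).mul (hasDerivAt_id s)).sub
      ((hasDerivAt_id s).const_mul (a ^ p))).sub
      ((hasDerivAt_const_add_rpow (hpos hs) (p + 1)).const_mul ((2 + μ) / (p + 1)))).add_const
      (((2 + μ) / (p + 1)) * a ^ (p + 1))).add
      ((hasDerivAt_id s).const_mul ((2 + μ) * a ^ p))).add
      (((hasDerivAt_id s).pow 2).const_mul ((μ / 2) * p * a ^ (p - 1)))
    have hp1 : p + 1 ≠ 0 := by linarith
    rw [hT]
    refine hd.deriv.trans ?_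
    simp only [id, add_sub_cancel_right]
    field_simp
    norm_num
    ring
  have h2 : ∀ s, -a < s → deriv (deriv T) s = p * (p - 1) * (a + s) ^ (p - 2) * s
      - μ * p * (a + s) ^ (p - 1) + μ * p * a ^ (p - 1) := by
    intro s hs
    have hd := ((((hasDerivAt_const_add_rpow (hpos hs) (p - 1)).const_mul p).mul
      (hasDerivAt_id s)).sub
      ((hasDerivAt_const_add_rpow (hpos hs) p).const_mul (1 + μ))).add_const
      ((1 + μ) * a ^ p) |>.add ((hasDerivAt_id s).const_mul (μ * p * a ^ (p - 1)))
    refine (deriv_deriv_eq_of_hasDerivAt_Ioi h1 hs hd).trans ?_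
    rw [show p - 1 - 1 = p - 2 by ring]
    simp only [id]
    ring
  have h3 : ∀ s, -a < s → deriv (deriv (deriv T)) s
      = p * (p - 1) * (p - 2) * (a + s) ^ (p - 3) * s
        + p * (p - 1) * (1 - μ) * (a + s) ^ (p - 2) := by
    intro s hs
    have hd := ((((hasDerivAt_const_add_rpow (hpos hs) (p - 2)).const_mul (p * (p - 1))).mul
      (hasDerivAt_id s)).sub
      ((hasDerivAt_const_add_rpow (hpos hs) (p - 1)).const_mul (μ * p))).add_const
      (μ * p * a ^ (p - 1))
    refine (deriv_deriv_eq_of_hasDerivAt_Ioi h2 hs hd).trans ?_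
    rw [show p - 1 - 1 = p - 2 by ring, show p - 2 - 1 = p - 3 by ring]
    simp only [id]
    ring
  refine ⟨by simp [hT], ?_, ?_, fun s hs => ⟨h3 s (by linarith), ?_⟩⟩
  · rw [h1 0 (by linarith)]
    simp
  · rw [h2 0 (by linarith)]
    simp
  · rw [hμ]
    exact third_deriv_nonneg hp ha hs
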